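/- The class of cographs is exactly the smallest class of finite simple graphs that contains the one-vertex graph and is closed under complementation and under disjoint union. That is, a finite graph G is a cograph if and only if G belongs to every class of graphs (closed under graph isomorphism) that contains the one-vertex graph and is closed under taking complements and under taking disjoint unions of two of its members. -/

import Mathlib

/-- A graph is a cograph if it has no induced subgraph isomorphic to `P₄`,
the path on four vertices. Graph embeddings capture induced subgraphs. -/
def IsCograph {V : Type*} (G : SimpleGraph V) : Prop :=
  IsEmpty (SimpleGraph.pathGraph 4 ↪g G)

/-!
The only hard part is that a finite cograph `G` with at least two vertices is disconnected or has
disconnected complement. Suppose both `G` and `Gᶜ` are connected and delete a vertex `v`. If `G - v`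
were disconnected, take a non-neighbour of `v` and walk inside its component of `G - v` to a
neighbour of `v`: somewhere the walk crosses an edge `pq` with `p ≁ v` and `q ∼ v`. With a neighbour
`z` of `v` in another component, `p - q - v - z` is an induced `P₄`. So `G - v` is connected, and by
self-complementarity of `P₄` so is its complement. Iterating leaves two vertices, for which `G` and
`Gᶜ` cannot both be connected.
-/

open SimpleGraph

universe u

section Reachability

variable {V : Type*} {G : SimpleGraph V}

theorem exists_reachable_adj_boundary {u w : V} (h : G.Reachable u w) {S : Set V} (hu : u ∈ S)
    (hw : w ∉ S) : ∃ a ∈ S, ∃ b ∉ S, G.Reachable u a ∧ G.Adj a b := by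
  obtain ⟨p⟩ := h
  obtain ⟨d, hd, hfst, hsnd⟩ := p.exists_boundary_dart S hu hw
  have hdp : d.fst ∈ p.support := p.dart_fst_mem_support_of_mem_darts hd
  classical
  exact ⟨d.fst, hfst, d.snd, hsnd, (p.takeUntil d.fst hdp).reachable, d.adj⟩

theorem exists_reachable_induce_compl_singleton_adj {v : V} (x : ({v}ᶜ : Set V))
    (h : G.Reachable x v) : ∃ z, (G.induce {v}ᶜ).Reachable x z ∧ G.Adj v z := by
  let component : Set V := Subtype.val '' {z | (G.induce {v}ᶜ).Reachable x z}
  have hv : v ∉ component := by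
    rintro ⟨z, -, hz⟩
    exact z.2 hz
  obtain ⟨_, ⟨a, hxa, rfl⟩, b, hb, -, hab⟩ :=
    exists_reachable_adj_boundary h (S := component) ⟨x, .rfl, rfl⟩ hv
  obtain rfl : b = v := by
    by_contra hbv
    have hab' : (G.induce {v}ᶜ).Adj a ⟨b, hbv⟩ := hab
    exact hb ⟨⟨b, hbv⟩, hxa.trans hab'.reachable, rfl⟩
  exact ⟨a, hxa, hab.symm⟩

theorem compl_induce (G : SimpleGraph V) (s : Set V) : (G.induce s)ᶜ = Gᶜ.induce s := by
  ext a b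
  simp [Subtype.ext_iff]

end Reachability

section DisjointUnion

variable {V : Type*} {G : SimpleGraph V}

/-- A graph with no edge between a set and its complement is the disjoint union of the subgraphs
induced on the two. -/
noncomputable def induceSumInduceComplIso {s : Set V} (h : ∀ a ∈ s, ∀ b ∉ s, ¬ G.Adj a b) :
    G.induce s ⊕g G.induce sᶜ ≃g G where
  toEquiv := by classical exact Equiv.Set.sumCompl s
  map_rel_iff' := by
    rintro (⟨a, ha⟩ | ⟨a, ha⟩) (⟨b, hb⟩ | ⟨b, hb⟩)
    · simp
    · simpa using h a ha b hb
    · simpa [G.adj_comm] using h b hb a ha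
    · simp

theorem exists_induce_sum_induce_compl_iso_of_not_preconnected (h : ¬ G.Preconnected) :
    ∃ s : Set V, s.Nonempty ∧ sᶜ.Nonempty ∧ Nonempty (G.induce s ⊕g G.induce sᶜ ≃g G) := by
  obtain ⟨x, y, hxy⟩ : ∃ x y, ¬ G.Reachable x y := by simpa [Preconnected] using h
  exact ⟨{z | G.Reachable x z}, ⟨x, .rfl⟩, ⟨y, hxy⟩,
    ⟨induceSumInduceComplIso fun a ha b hb hab ↦ hb (ha.trans hab.reachable)⟩⟩

end DisjointUnion

theorem isCograph_iff_forall_adj {V : Type*} {G : SimpleGraph V} :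
    IsCograph G ↔ ∀ a b c d, G.Adj a b → G.Adj b c → G.Adj c d →
      G.Adj a c ∨ G.Adj a d ∨ G.Adj b d := by
  constructor
  · intro hG a b c d hab hbc hcd
    by_contra! ⟨hac, had, hbd⟩
    have map_adj_iff (i j : Fin 4) :
        G.Adj (![a, b, c, d] i) (![a, b, c, d] j) ↔ (pathGraph 4).Adj i j := by
      fin_cases i <;> fin_cases j <;>
        simp [pathGraph_adj, hab, hbc, hcd, hac, had, hbd, hab.symm, hbc.symm, hcd.symm,
          G.adj_comm c a, G.adj_comm d a, G.adj_comm d b]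
    -- Two vertices with the same image would be twins, so injectivity comes for free.
    have twin_free : ∀ i j : Fin 4,
        (∀ k, (pathGraph 4).Adj i k ↔ (pathGraph 4).Adj j k) → i = j := by
      simp only [pathGraph_adj]
      decide
    have injective : Function.Injective ![a, b, c, d] := fun i j hij ↦
      twin_free i j fun k ↦ by rw [← map_adj_iff, ← map_adj_iff, hij]
    exact hG.false ⟨⟨_, injective⟩, map_adj_iff _ _⟩
  · refine fun h ↦ ⟨fun f ↦ ?_⟩
    simpa [pathGraph_adj] using h (f 0) (f 1) (f 2) (f 3)

namespace IsCograph

variable {V W : Type*} {G : SimpleGraph V} {H : SimpleGraph W}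

theorem of_embedding (hH : IsCograph H) (f : G ↪g H) : IsCograph G :=
  ⟨fun g ↦ hH.false (g.trans f)⟩

theorem induce (hG : IsCograph G) (s : Set V) : IsCograph (G.induce s) :=
  hG.of_embedding (Embedding.induce s)

theorem of_subsingleton [Subsingleton V] : IsCograph G :=
  ⟨fun f ↦ absurd (f.injective (Subsingleton.elim (f 0) (f 1))) (by decide)⟩

theorem compl (hG : IsCograph G) : IsCograph Gᶜ := by
  rw [isCograph_iff_forall_adj] at hG ⊢
  intro a b c d hab hbc hcd
  -- The complement of the path `a - b - c - d` is the path `b - d - a - c`.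
  have := hG b d a c
  simp only [compl_adj] at hab hbc hcd ⊢
  grind [G.adj_comm]

theorem sum (hG : IsCograph G) (hH : IsCograph H) : IsCograph (G ⊕g H) := by
  rw [isCograph_iff_forall_adj] at *
  rintro (a | a) (b | b) (c | c) (d | d) <;> grind [SimpleGraph.sum]

theorem preconnected_induce_compl_singleton (hG : IsCograph G) (h : G.Preconnected)
    (hc : Gᶜ.Preconnected) (v : V) : (G.induce {v}ᶜ).Preconnected := by
  by_contra hdisconn
  obtain ⟨y, hvy⟩ : ∃ y : ({v}ᶜ : Set V), ¬ G.Adj v y := by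
    have : Nontrivial V := by
      by_contra! hV
      exact hdisconn .of_subsingleton
    obtain ⟨y, hvy⟩ := hc.exists_adj_of_nontrivial v
    exact ⟨⟨y, hvy.ne'⟩, hvy.2⟩
  obtain ⟨x, hyx, hvx⟩ := exists_reachable_induce_compl_singleton_adj y (h y v)
  obtain ⟨p, hvp, q, hvq, hyp, hpq⟩ :=
    exists_reachable_adj_boundary hyx (S := {w | ¬ G.Adj v w}) hvy (not_not_intro hvx)
  obtain ⟨z, hyz, hvz⟩ : ∃ z, ¬ (G.induce {v}ᶜ).Reachable y z ∧ G.Adj v z := by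
    obtain ⟨x', hyx'⟩ : ∃ x', ¬ (G.induce {v}ᶜ).Reachable y x' := by
      by_contra! hy
      exact hdisconn fun a b ↦ (hy a).symm.trans (hy b)
    obtain ⟨z, hxz, hvz⟩ := exists_reachable_induce_compl_singleton_adj x' (h x' v)
    exact ⟨z, fun hyz ↦ hyx' (hyz.trans hxz.symm), hvz⟩
  have not_adj_z {w : ({v}ᶜ : Set V)} (hyw : (G.induce {v}ᶜ).Reachable y w) : ¬ G.Adj w z :=
    fun hwz ↦ hyz (hyw.trans (induce_adj.2 hwz).reachable)
  rcases isCograph_iff_forall_adj.1 hG p q v z hpq (not_not.1 hvq).symm hvz with hpv | hpz | hqz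
  · exact hvp hpv.symm
  · exact not_adj_z hyp hpz
  · exact not_adj_z (hyp.trans hpq.reachable) hqz

theorem subsingleton_of_preconnected [Finite V] (hG : IsCograph G) (h : G.Preconnected)
    (hc : Gᶜ.Preconnected) : Subsingleton V := by
  induction hn : Nat.card V using Nat.strong_induction_on generalizing V with
  | _ n ih =>
    have delete_vertex (v : V) : Subsingleton ({v}ᶜ : Set V) := by
      have hlt : Nat.card ({v}ᶜ : Set V) < n := hn ▸ Set.ncard_lt_card (by simp)
      refine ih _ hlt (hG.induce _) (hG.preconnected_induce_compl_singleton h hc v) ?_ rfl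
      rw [compl_induce]
      exact hG.compl.preconnected_induce_compl_singleton hc (by rwa [compl_compl]) v
    by_contra! hV
    obtain ⟨v⟩ := hV.to_nonempty
    obtain ⟨a, hva⟩ := h.exists_adj_of_nontrivial v
    obtain ⟨b, hvb⟩ := hc.exists_adj_of_nontrivial v
    have hab : a = b := congrArg Subtype.val
      ((delete_vertex v).elim ⟨a, hva.ne'⟩ ⟨b, hvb.ne'⟩)
    exact hvb.2 (hab ▸ hva)

theorem not_preconnected_or_compl [Finite V] [Nontrivial V] (hG : IsCograph G) :
    ¬ G.Preconnected ∨ ¬ Gᶜ.Preconnected := by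
  by_contra! ⟨h, hc⟩
  exact not_subsingleton V (hG.subsingleton_of_preconnected h hc)

theorem closure_induction {motive : ∀ (α : Type u) [Fintype α], SimpleGraph α → Prop}
    (iso : ∀ (α β : Type u) [Fintype α] [Fintype β] (G₁ : SimpleGraph α) (G₂ : SimpleGraph β),
      G₁ ≃g G₂ → motive α G₁ → motive β G₂)
    (singleton : ∀ (α : Type u) [Fintype α] [Unique α], motive α ⊥)
    (compl : ∀ (α : Type u) [Fintype α] (G₁ : SimpleGraph α), motive α G₁ → motive α G₁ᶜ)
    (sum : ∀ (α β : Type u) [Fintype α] [Fintype β] (G₁ : SimpleGraph α) (G₂ : SimpleGraph β),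
      motive α G₁ → motive β G₂ → motive (α ⊕ β) (G₁ ⊕g G₂))
    {α : Type u} [Fintype α] [Nonempty α] {G : SimpleGraph α} (hG : IsCograph G) :
    motive α G := by
  induction hn : Fintype.card α using Nat.strong_induction_on generalizing α with
  | _ n ih =>
    subst hn
    have of_not_preconnected {H : SimpleGraph α} (hH : IsCograph H) (h : ¬ H.Preconnected) :
        motive α H := by
      classical
      obtain ⟨s, ⟨a, ha⟩, ⟨b, hb⟩, ⟨e⟩⟩ :=
        exists_induce_sum_induce_compl_iso_of_not_preconnected h
      have : Nonempty s := ⟨a, ha⟩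
      have : Nonempty ↑sᶜ := ⟨b, hb⟩
      refine iso _ _ _ _ e (sum _ _ _ _ (ih _ ?_ (hH.induce s) rfl) (ih _ ?_ (hH.induce sᶜ) rfl))
      · exact Fintype.card_subtype_lt hb
      · exact Fintype.card_subtype_lt (not_not_intro ha)
    rcases subsingleton_or_nontrivial α with hα | hα
    · obtain ⟨_⟩ := nonempty_unique α
      exact Subsingleton.elim ⊥ G ▸ singleton α
    · rcases hG.not_preconnected_or_compl with h | h
      · exact of_not_preconnected hG h
      · simpa using compl _ _ (of_not_preconnected hG.compl h)

end IsCograph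

/-- A (nonempty) finite simple graph `G` is a cograph if and only if `G` belongs to every
class of finite graphs that is closed under isomorphism, contains the one-vertex graph,
and is closed under complementation and under disjoint unions. -/
theorem cograph_iff_mem_closure
    {V : Type} [Fintype V] [Nonempty V] (G : SimpleGraph V) :
    IsCograph G ↔
      ∀ P : ∀ (α : Type) [Fintype α], SimpleGraph α → Prop,
        (∀ (α : Type) [Fintype α] (β : Type) [Fintype β]
            (G₁ : SimpleGraph α) (G₂ : SimpleGraph β),
            Nonempty (G₁ ≃g G₂) → P α G₁ → P β G₂) →
        P (Fin 1) ⊥ →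
        (∀ (α : Type) [Fintype α] (G₁ : SimpleGraph α), P α G₁ → P α G₁ᶜ) →
        (∀ (α : Type) [Fintype α] (β : Type) [Fintype β]
            (G₁ : SimpleGraph α) (G₂ : SimpleGraph β),
            P α G₁ → P β G₂ → P (α ⊕ β) (G₁ ⊕g G₂)) →
        P V G := by
  constructor
  · intro hG P hiso hone hcompl hsum
    refine hG.closure_induction (motive := P) (fun _ _ _ _ _ _ e ↦ hiso _ _ _ _ ⟨e⟩) ?_ hcompl
      fun _ _ _ _ ↦ hsum _ _
    exact fun α _ _ ↦ hiso _ _ _ _ ⟨⟨Equiv.ofUnique (Fin 1) α, Iff.rfl⟩⟩ hone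
  · intro h
    exact h (fun _ _ H ↦ IsCograph H)
      (fun _ _ _ _ _ _ ⟨e⟩ hG₁ ↦ hG₁.of_embedding e.symm.toEmbedding)
      .of_subsingleton
      (fun _ _ _ hG₁ ↦ hG₁.compl)
      (fun _ _ _ _ _ _ hG₁ hG₂ ↦ hG₁.sum hG₂)
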